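/- Let Φ_1, …, Φ_k ∈ ℂ^{p×p} be given matrices (playing the role of f_j(M) for an invariant pair (V, M)), let V ∈ ℂ^{n×p}, R = Σ_{j=1}^k F_j V Φ_j, and Ĝ = [Φ_1^T, …, Φ_k^T] ∈ ℂ^{p×kp}. Assume each coefficient F_j lies in a linear subspace 𝒮_j with Frobenius-orthonormal basis P^{(1,j)}, …, P^{(d_j,j)}. Then the structured backward error η_𝒮 := min{ ‖[δF_1, …, δF_k]‖_F : δF_j ∈ 𝒮_j and Σ_{j=1}^k (F_j + δF_j) V Φ_j = 0 } satisfies η_𝒮 = ‖[((Ĝ (I_k ⊗ V^T)) ⊗ I_n) P]† vec(R)‖₂, and consequently η_𝒮 ≤ σ_min(((Ĝ (I_k ⊗ V^T)) ⊗ I_n) P)^{−1} ‖R‖_F. -/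

import Mathlib

open Matrix Kronecker BigOperators

noncomputable section

/-- Frobenius norm of a complex matrix. -/
def fnorm {ι κ : Type*} [Fintype ι] [Fintype κ] (A : Matrix ι κ ℂ) : ℝ :=
  Real.sqrt (∑ i, ∑ j, ‖A i j‖ ^ 2)

/-- Euclidean norm of a complex vector. -/
def vnorm {ι : Type*} [Fintype ι] (v : ι → ℂ) : ℝ :=
  Real.sqrt (∑ i, ‖v i‖ ^ 2)

/-- The four Moore–Penrose conditions. -/
def IsMoorePenrose {ι κ : Type*} [Fintype ι] [Fintype κ]
    (A : Matrix ι κ ℂ) (B : Matrix κ ι ℂ) : Prop :=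
  A * B * A = A ∧ B * A * B = B ∧ (A * B)ᴴ = A * B ∧ (B * A)ᴴ = B * A

open scoped Classical in
/-- The Moore–Penrose pseudoinverse (defined by choice; it always exists and is unique). -/
noncomputable def pinv {ι κ : Type*} [Fintype ι] [Fintype κ] (A : Matrix ι κ ℂ) :
    Matrix κ ι ℂ :=
  if h : ∃ B, IsMoorePenrose A B then h.choose else 0

/-- `s` is a singular value of `A`: `s ≥ 0` and `s²` is an eigenvalue of `Aᴴ A`. -/
def IsSingularValue {ι κ : Type*} [Fintype ι] [Fintype κ] (A : Matrix ι κ ℂ) (s : ℝ) : Prop :=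
  0 ≤ s ∧ ∃ w : κ → ℂ, w ≠ 0 ∧ (Aᴴ * A).mulVec w = ((s : ℂ) ^ 2) • w

/-- The smallest nonzero singular value of `A`, i.e. `σ_p̂(A)` where `p̂ = rank A`. -/
noncomputable def sigmaMinPos {ι κ : Type*} [Fintype ι] [Fintype κ] (A : Matrix ι κ ℂ) : ℝ :=
  sInf {s : ℝ | IsSingularValue A s ∧ 0 < s}

/-- The smallest singular value of a square matrix `A`, the minimum of `‖A v‖₂` over
unit vectors `v`. -/
noncomputable def sigmaMinSq {n : ℕ} (A : Matrix (Fin n) (Fin n) ℂ) : ℝ :=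
  sInf {x : ℝ | ∃ w : Fin n → ℂ, vnorm w = 1 ∧ x = vnorm (A.mulVec w)}

/-- The transposed Khatri–Rao product `G ⊙^T W` of `G : p × k` and `W : p × n`:
the `p × kn` matrix whose `i`-th row is `[G i 1 • (row i of W), …, G i k • (row i of W)]`. -/
def krt {p k n : ℕ} (G : Matrix (Fin p) (Fin k) ℂ) (W : Matrix (Fin p) (Fin n) ℂ) :
    Matrix (Fin p) (Fin k × Fin n) ℂ :=
  Matrix.of fun i jl => G i jl.1 * W i jl.2

open scoped ComplexOrder in
theorem aux_pinv_exists {ι κ : Type*} [Fintype ι] [Fintype κ] (A : Matrix ι κ ℂ) :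
    ∃ B, IsMoorePenrose A B := by
  classical
  have hH : (Aᴴ * A).IsHermitian := Matrix.isHermitian_conjTranspose_mul_self A
  obtain ⟨U, D, hU, hU', hD⟩ : ∃ (U : Matrix κ κ ℂ) (D : κ → ℝ), Uᴴ * U = 1 ∧ U * Uᴴ = 1 ∧
      Aᴴ * A = U * diagonal (fun i => (D i : ℂ)) * Uᴴ := by
    refine ⟨hH.eigenvectorUnitary, hH.eigenvalues, ?_, ?_, ?_⟩
    · exact Unitary.coe_star_mul_self hH.eigenvectorUnitary
    · exact Unitary.coe_mul_star_self hH.eigenvectorUnitary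
    · have := hH.spectral_theorem
      exact this
  set E : Matrix κ κ ℂ := diagonal (fun i => (D i : ℂ)) with hE
  set E' : Matrix κ κ ℂ := diagonal (fun i => ((D i)⁻¹ : ℂ)) with hE'
  have e1 : E * E' * E = E := by
    simp only [hE, hE', diagonal_mul_diagonal]
    congr 1; funext i
    by_cases h : (D i : ℂ) = 0
    · simp [h]
    · field_simp
  have e2 : E' * E * E' = E' := by
    simp only [hE, hE', diagonal_mul_diagonal]
    congr 1; funext i
    by_cases h : (D i : ℂ) = 0
    · simp [h]
    · field_simp
  have e3 : (E' * E)ᴴ = E' * E := by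
    simp only [hE, hE', diagonal_mul_diagonal, diagonal_conjTranspose]
    congr 1; funext i
    simp
  have e4 : E'ᴴ = E' := by
    simp only [hE', diagonal_conjTranspose]
    congr 1; funext i
    simp
  set H' := U * E' * Uᴴ with hH'
  have c (X Y : Matrix κ κ ℂ) : U * X * Uᴴ * (U * Y * Uᴴ) = U * (X * Y) * Uᴴ := by
    calc U * X * Uᴴ * (U * Y * Uᴴ) = U * X * (Uᴴ * U) * Y * Uᴴ := by simp only [Matrix.mul_assoc]
      _ = _ := by rw [hU]; simp only [Matrix.mul_assoc, Matrix.mul_one]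
  have k1 : (Aᴴ * A) * H' * (Aᴴ * A) = Aᴴ * A := by rw [hD, hH', c, c, e1]
  have k2 : H' * (Aᴴ * A) * H' = H' := by rw [hD, hH', c, c, e2]
  have k3 : (H' * (Aᴴ * A))ᴴ = H' * (Aᴴ * A) := by
    rw [hD, hH', c]
    rw [conjTranspose_mul, conjTranspose_mul, e3, conjTranspose_conjTranspose,
      ← Matrix.mul_assoc]
  have k4 : H'ᴴ = H' := by
    rw [hH', conjTranspose_mul, conjTranspose_mul, e4, conjTranspose_conjTranspose,
      Matrix.mul_assoc]
  refine ⟨H' * Aᴴ, ?_, ?_, ?_, ?_⟩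
  · have h0 : A * (H' * (Aᴴ * A) - 1) = 0 := by
      rw [← Matrix.conjTranspose_mul_self_mul_eq_zero, Matrix.mul_sub, ← Matrix.mul_assoc, k1]
      simp
    rw [Matrix.mul_sub, sub_eq_zero, Matrix.mul_one] at h0
    simpa only [Matrix.mul_assoc] using h0
  · calc H' * Aᴴ * A * (H' * Aᴴ) = (H' * (Aᴴ * A) * H') * Aᴴ := by simp only [Matrix.mul_assoc]
      _ = _ := by rw [k2]
  · simp only [conjTranspose_mul, conjTranspose_conjTranspose, k4, Matrix.mul_assoc]
  · rw [Matrix.mul_assoc, k3]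

theorem aux_pinv {ι κ : Type*} [Fintype ι] [Fintype κ] (A : Matrix ι κ ℂ) :
    IsMoorePenrose A (pinv A) := by
  have h := aux_pinv_exists A
  unfold pinv
  rw [dif_pos h]
  exact h.choose_spec

theorem aux_vn_sq {ι : Type*} [Fintype ι] (v : ι → ℂ) : vnorm v ^ 2 = ∑ i, ‖v i‖ ^ 2 :=
  Real.sq_sqrt (Finset.sum_nonneg fun i _ => by positivity)

theorem aux_vn_nonneg {ι : Type*} [Fintype ι] (v : ι → ℂ) : 0 ≤ vnorm v := Real.sqrt_nonneg _

theorem aux_vn_dot {ι : Type*} [Fintype ι] (v : ι → ℂ) : ((vnorm v ^ 2 : ℝ) : ℂ) = star v ⬝ᵥ v := by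
  rw [aux_vn_sq, dotProduct]
  push_cast
  refine Finset.sum_congr rfl fun i _ => ?_
  simp [← Complex.conj_mul']

theorem aux_dot_mulVec {ι κ : Type*} [Fintype ι] [Fintype κ] (A : Matrix ι κ ℂ) (x : κ → ℂ)
    (y : ι → ℂ) : star (A *ᵥ x) ⬝ᵥ y = star x ⬝ᵥ (Aᴴ *ᵥ y) := by
  rw [star_mulVec, dotProduct_mulVec]

theorem aux_proj {ι : Type*} [Fintype ι] (Q : Matrix ι ι ℂ) (h1 : Qᴴ = Q) (h2 : Q * Q = Q)
    (c : ι → ℂ) : vnorm (Q *ᵥ c) ≤ vnorm c := by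
  have e : vnorm c ^ 2 = vnorm (Q *ᵥ c) ^ 2 + vnorm (c - Q *ᵥ c) ^ 2 := by
    apply Complex.ofReal_injective
    push_cast [aux_vn_dot]
    have := aux_vn_dot c
    have := aux_vn_dot (Q *ᵥ c)
    have := aux_vn_dot (c - Q *ᵥ c)
    push_cast at *
    simp only [*, star_sub, sub_dotProduct, dotProduct_sub, aux_dot_mulVec, mulVec_mulVec]
    ring
  nlinarith [aux_vn_nonneg c, aux_vn_nonneg (Q *ᵥ c), sq_nonneg (vnorm (c - Q *ᵥ c))]

open scoped ComplexOrder in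
theorem aux_sigma {ι κ : Type*} [Fintype ι] [Fintype κ] (A : Matrix ι κ ℂ) (z : ι → ℂ) :
    0 < sigmaMinPos A ∧ sigmaMinPos A * vnorm (Aᴴ *ᵥ z) ≤ vnorm (A *ᵥ (Aᴴ *ᵥ z)) ∨ A = 0 := by
  classical
  have hH : (Aᴴ * A).IsHermitian := Matrix.isHermitian_conjTranspose_mul_self A
  have hpsd : (Aᴴ * A).PosSemidef := Matrix.posSemidef_conjTranspose_mul_self A
  set U : Matrix κ κ ℂ := (hH.eigenvectorUnitary : Matrix κ κ ℂ) with hUdef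
  set D : κ → ℝ := hH.eigenvalues with hDdef
  have hU : Uᴴ * U = 1 := Unitary.coe_star_mul_self hH.eigenvectorUnitary
  have hU' : U * Uᴴ = 1 := Unitary.coe_mul_star_self hH.eigenvectorUnitary
  have hD : Aᴴ * A = U * diagonal (fun i => (D i : ℂ)) * Uᴴ := hH.spectral_theorem
  have hD0 : ∀ i, 0 ≤ D i := hpsd.eigenvalues_nonneg
  let u : κ → κ → ℂ := fun i => U *ᵥ Pi.single i 1
  have hu0 : ∀ i, Uᴴ *ᵥ u i = Pi.single i 1 := fun i => by
    simp only [u]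
    rw [mulVec_mulVec, hU, one_mulVec]
  have hu : ∀ i, u i ≠ 0 := fun i h => by
    have := congrFun (hu0 i) i
    simp [h] at this
  have hev : ∀ i, (Aᴴ * A) *ᵥ u i = (D i : ℂ) • u i := fun i => by
    rw [hD, ← mulVec_mulVec, hu0, ← mulVec_mulVec]
    have : diagonal (fun i => (D i : ℂ)) *ᵥ Pi.single i 1 = (D i : ℂ) • Pi.single i (1:ℂ) := by
      ext j; by_cases h : j = i
      · subst h; simp [mulVec_diagonal]
      · simp [mulVec_diagonal, h]
    rw [this, mulVec_smul]
  have hsv : ∀ i, IsSingularValue A (Real.sqrt (D i)) := fun i => by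
    refine ⟨Real.sqrt_nonneg _, u i, hu i, ?_⟩
    rw [hev, ← Complex.ofReal_pow, Real.sq_sqrt (hD0 i)]
  have hbdd : BddBelow {s : ℝ | IsSingularValue A s ∧ 0 < s} := ⟨0, fun s hs => hs.2.le⟩
  by_cases hA : A = 0
  · exact Or.inr hA
  left
  -- every positive singular value is the root of an eigenvalue
  have hsub : ∀ s, IsSingularValue A s → ∃ i, s = Real.sqrt (D i) := by
    rintro s ⟨hs, w, hw, hws⟩
    have hy : Uᴴ *ᵥ w ≠ 0 := fun h => hw (by
      have : U *ᵥ (Uᴴ *ᵥ w) = 0 := by rw [h]; simp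
      rwa [mulVec_mulVec, hU', one_mulVec] at this)
    obtain ⟨i, hi⟩ := Function.ne_iff.mp hy
    refine ⟨i, ?_⟩
    have h1 : diagonal (fun i => (D i : ℂ)) *ᵥ (Uᴴ *ᵥ w) = ((s : ℂ) ^ 2) • (Uᴴ *ᵥ w) := by
      rw [← mulVec_smul, ← hws, hD, mulVec_mulVec, mulVec_mulVec, ← Matrix.mul_assoc,
        ← Matrix.mul_assoc, hU, Matrix.one_mul]
    have h2 := congrFun h1 i
    rw [mulVec_diagonal, Pi.smul_apply, smul_eq_mul] at h2
    have h3 := mul_right_cancel₀ hi h2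
    have h4 : D i = s ^ 2 := by exact_mod_cast h3
    rw [h4, Real.sqrt_sq hs]
  have hne : ∃ i, 0 < D i := by
    by_contra! hcon
    apply hA
    have : (fun i => (D i : ℂ)) = 0 := by
      funext i; simp [le_antisymm (hcon i) (hD0 i)]
    rw [← Matrix.conjTranspose_mul_self_eq_zero, hD, this]
    simp
  obtain ⟨i0, hi0⟩ := hne
  have hnonempty : {s : ℝ | IsSingularValue A s ∧ 0 < s}.Nonempty :=
    ⟨_, hsv i0, Real.sqrt_pos.2 hi0⟩
  have hfin : {s : ℝ | IsSingularValue A s ∧ 0 < s}.Finite := by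
    refine (Set.finite_range (fun i => Real.sqrt (D i))).subset ?_
    rintro s ⟨hs, _⟩
    obtain ⟨i, rfl⟩ := hsub s hs
    exact ⟨i, rfl⟩
  have hmem : 0 < sigmaMinPos A := (hnonempty.csInf_mem hfin).2
  refine ⟨hmem, ?_⟩
  set σ := sigmaMinPos A
  have hle : ∀ i, 0 < D i → σ ^ 2 ≤ D i := fun i hi => by
    have : σ ≤ Real.sqrt (D i) := csInf_le hbdd ⟨hsv i, Real.sqrt_pos.2 hi⟩
    calc σ ^ 2 ≤ Real.sqrt (D i) ^ 2 := by gcongr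
      _ = D i := Real.sq_sqrt hi.le
  set x := Aᴴ *ᵥ z with hx
  set y := Uᴴ *ᵥ x with hy
  have hxU : x = U *ᵥ y := by rw [hy, mulVec_mulVec, hU', one_mulVec]
  have n1 : vnorm x ^ 2 = ∑ i, ‖y i‖ ^ 2 := by
    rw [← aux_vn_sq]
    apply Complex.ofReal_injective
    rw [aux_vn_dot, aux_vn_dot, hy, aux_dot_mulVec Uᴴ, mulVec_mulVec x, conjTranspose_conjTranspose,
      hU', one_mulVec]
  have n2 : vnorm (A *ᵥ x) ^ 2 = ∑ i, D i * ‖y i‖ ^ 2 := by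
    apply Complex.ofReal_injective
    rw [aux_vn_dot, aux_dot_mulVec, mulVec_mulVec, hD, ← mulVec_mulVec, ← hy, ← mulVec_mulVec,
      ← conjTranspose_conjTranspose U, ← aux_dot_mulVec, ← hy,
      dotProduct]
    push_cast
    refine Finset.sum_congr rfl fun i _ => ?_
    rw [mulVec_diagonal, ← Complex.conj_mul']
    simp only [Pi.star_apply, RCLike.star_def]
    ring
  have hy0 : ∀ i, D i = 0 → y i = 0 := fun i hi => by
    have h1 : (Aᴴ * A) *ᵥ u i = 0 := by rw [hev, hi]; simp
    have h2 : A *ᵥ u i = 0 := (Matrix.conjTranspose_mul_self_mulVec_eq_zero A _).1 h1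
    have h3 : star (u i) ⬝ᵥ x = 0 := by rw [hx, ← aux_dot_mulVec, h2]; simp
    have h4 : star (u i) ⬝ᵥ x = y i := by
      change star (U *ᵥ Pi.single i 1) ⬝ᵥ x = _
      rw [aux_dot_mulVec, ← hy, ← Pi.single_star]; simp
    rw [← h4, h3]
  have : (σ * vnorm x) ^ 2 ≤ vnorm (A *ᵥ x) ^ 2 := by
    rw [mul_pow, n1, n2, Finset.mul_sum]
    refine Finset.sum_le_sum fun i _ => ?_
    rcases (hD0 i).eq_or_lt with h | h
    · simp [hy0 i h.symm]
    · exact mul_le_mul_of_nonneg_right (hle i h) (by positivity)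
  exact le_of_sq_le_sq this (aux_vn_nonneg _)

theorem aux_bound {ι κ : Type*} [Fintype ι] [Fintype κ] (A : Matrix ι κ ℂ) (r : ι → ℂ) :
    vnorm (pinv A *ᵥ r) ≤ (sigmaMinPos A)⁻¹ * vnorm r := by
  obtain ⟨h1, h2, h3, h4⟩ := aux_pinv A
  set B := pinv A
  have hx : B *ᵥ r = Aᴴ *ᵥ ((Bᴴ * B) *ᵥ r) := by
    rw [mulVec_mulVec, ← Matrix.mul_assoc, ← conjTranspose_mul, h4, h2]
  rcases aux_sigma A ((Bᴴ * B) *ᵥ r) with ⟨hp, h⟩ | h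
  · rw [← hx, mulVec_mulVec] at h
    have := aux_proj (A * B) h3 (by rw [← Matrix.mul_assoc, h1]) r
    rw [inv_mul_eq_div, le_div_iff₀ hp, mul_comm]
    exact h.trans this
  · have : B = 0 := by rw [← h2, h]; simp
    rw [this]
    have h0 : 0 ≤ sigmaMinPos A := Real.sInf_nonneg fun s hs => hs.2.le
    have : vnorm ((0 : Matrix κ ι ℂ) *ᵥ r) = 0 := by simp [vnorm]
    rw [this]
    exact mul_nonneg (inv_nonneg.2 h0) (aux_vn_nonneg _)

/-- Structured backward error for an invariant pair `(V, M)` (with `Φⱼ` playing the role of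
`fⱼ(M)`) and coefficients in linear subspaces `𝒮ⱼ` with Frobenius-orthonormal bases: the
structured backward error is attained and equals
`‖[((Ĝ (I_k ⊗ Vᵀ)) ⊗ Iₙ) P]† vec R‖₂`, where `Ĝ = [Φ₁ᵀ, …, Φₖᵀ]` and `R = ∑ⱼ Fⱼ V Φⱼ`;
consequently `η_𝒮 ≤ σ_min(((Ĝ (I_k ⊗ Vᵀ)) ⊗ Iₙ) P)⁻¹ ‖R‖_F`. -/
theorem structured_backward_error_invariant_pair (n k p : ℕ)
    (F : Fin k → Matrix (Fin n) (Fin n) ℂ)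
    (Φ : Fin k → Matrix (Fin p) (Fin p) ℂ)
    (V : Matrix (Fin n) (Fin p) ℂ)
    (d : Fin k → ℕ)
    (P : (j : Fin k) → Fin (d j) → Matrix (Fin n) (Fin n) ℂ)
    (hP : ∀ j a b, ∑ m, ∑ l, (starRingEnd ℂ) (P j a m l) * P j b m l =
      if a = b then 1 else 0)
    (hF : ∀ j, F j ∈ Submodule.span ℂ (Set.range (P j)))
    (Ghat : Matrix (Fin p) (Fin k × Fin p) ℂ)
    (hGhat : ∀ i j s, Ghat i (j, s) = Φ j s i)
    (Mkr : Matrix (Fin p) (Fin k × Fin n) ℂ)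
    (hMkr : Mkr = Ghat * ((1 : Matrix (Fin k) (Fin k) ℂ) ⊗ₖ Vᵀ))
    (R : Matrix (Fin n) (Fin p) ℂ)
    (hR : R = ∑ j, F j * V * Φ j)
    (r : Fin p × Fin n → ℂ) (hr : ∀ i m, r (i, m) = R m i)
    (Pm : Matrix ((Fin k × Fin n) × Fin n) ((j : Fin k) × Fin (d j)) ℂ)
    (hPm : ∀ jl m c, Pm (jl, m) c = if jl.1 = c.1 then P c.1 c.2 m jl.2 else 0) :
    IsLeast
      {x : ℝ | ∃ δF : Fin k → Matrix (Fin n) (Fin n) ℂ,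
        (∀ j, δF j ∈ Submodule.span ℂ (Set.range (P j))) ∧
        (∑ j, (F j + δF j) * V * Φ j) = 0 ∧
        x = fnorm (Matrix.of fun (m : Fin n) (jl : Fin k × Fin n) => δF jl.1 m jl.2)}
      (vnorm ((pinv ((Mkr ⊗ₖ (1 : Matrix (Fin n) (Fin n) ℂ)) * Pm)).mulVec r)) ∧
    vnorm ((pinv ((Mkr ⊗ₖ (1 : Matrix (Fin n) (Fin n) ℂ)) * Pm)).mulVec r) ≤
      (sigmaMinPos ((Mkr ⊗ₖ (1 : Matrix (Fin n) (Fin n) ℂ)) * Pm))⁻¹ * fnorm R := by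
  set A := (Mkr ⊗ₖ (1 : Matrix (Fin n) (Fin n) ℂ)) * Pm with hA
  have hAe : ∀ i m c, A (i, m) c = (P c.1 c.2 * V * Φ c.1) m i := by
    intro i m c
    have hM : ∀ j l, Mkr i (j, l) = (V * Φ j) l i := by
      intro j l
      rw [hMkr, Matrix.mul_apply, Fintype.sum_prod_type, Finset.sum_eq_single j]
      · rw [Matrix.mul_apply]
        refine Finset.sum_congr rfl fun s _ => ?_
        simp [hGhat, mul_comm]
      · intro b _ hb
        simp [hb]
      · simp
    rw [hA, Matrix.mul_apply, Fintype.sum_prod_type, Fintype.sum_prod_type,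
      Finset.sum_eq_single c.1, Matrix.mul_assoc, Matrix.mul_apply]
    · refine Finset.sum_congr rfl fun l _ => ?_
      rw [Finset.sum_eq_single m]
      · simp [hPm, hM, mul_comm]
      · intro b _ hb
        simp [Matrix.one_apply_ne hb.symm]
      · simp
    · intro b _ hb
      simp [hPm, hb]
    · simp
  let δ : ((j : Fin k) × Fin (d j) → ℂ) → Fin k → Matrix (Fin n) (Fin n) ℂ :=
    fun c j => ∑ a, c ⟨j, a⟩ • P j a
  have hAm : ∀ c i m, (A *ᵥ c) (i, m) = (∑ j, δ c j * V * Φ j) m i := by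
    intro c i m
    rw [mulVec, dotProduct, Fintype.sum_sigma, Matrix.sum_apply]
    refine Finset.sum_congr rfl fun j _ => ?_
    simp only [δ, Matrix.sum_mul, Matrix.sum_apply, Matrix.smul_mul, Matrix.smul_apply, hAe,
      smul_eq_mul]
    exact Finset.sum_congr rfl fun a _ => mul_comm _ _
  have hδn : ∀ c, fnorm (Matrix.of fun (m : Fin n) (jl : Fin k × Fin n) => δ c jl.1 m jl.2)
      = vnorm c := by
    intro c
    unfold fnorm vnorm
    congr 1
    apply Complex.ofReal_injective
    simp only [of_apply, Fintype.sum_prod_type, Fintype.sum_sigma]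
    rw [Finset.sum_comm]
    push_cast
    refine Finset.sum_congr rfl fun j _ => ?_
    calc ∑ m, ∑ l, (‖δ c j m l‖ : ℂ) ^ 2
        = ∑ m, ∑ l, ∑ a, ∑ b, (starRingEnd ℂ (c ⟨j, a⟩) * c ⟨j, b⟩) *
            (starRingEnd ℂ (P j a m l) * P j b m l) := by
          refine Finset.sum_congr rfl fun m _ => Finset.sum_congr rfl fun l _ => ?_
          rw [← Complex.conj_mul']
          simp only [δ, Matrix.sum_apply, Matrix.smul_apply, smul_eq_mul, map_sum, map_mul,
            Finset.sum_mul_sum]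
          refine Finset.sum_congr rfl fun a _ => Finset.sum_congr rfl fun b _ => ?_
          ring
      _ = ∑ a, ∑ b, (starRingEnd ℂ (c ⟨j, a⟩) * c ⟨j, b⟩) *
            ∑ m, ∑ l, (starRingEnd ℂ (P j a m l) * P j b m l) := by
          simp only [Finset.mul_sum]
          have e1 : ∀ m, ∀ f : Fin n → Fin n → Fin (d j) → Fin (d j) → ℂ,
              ∑ l, ∑ a, ∑ b, f m l a b = ∑ a, ∑ b, ∑ l, f m l a b := fun m f => by
            rw [Finset.sum_comm]
            exact Finset.sum_congr rfl fun a _ => Finset.sum_comm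
          have e2 : ∀ g : Fin n → Fin (d j) → Fin (d j) → ℂ,
              ∑ m, ∑ a, ∑ b, g m a b = ∑ a, ∑ b, ∑ m, g m a b := fun g => by
            rw [Finset.sum_comm]
            exact Finset.sum_congr rfl fun a _ => Finset.sum_comm
          rw [← e2]
          refine Finset.sum_congr rfl fun m _ => ?_
          exact e1 m fun m l a b => (starRingEnd ℂ (c ⟨j, a⟩) * c ⟨j, b⟩) *
            (starRingEnd ℂ (P j a m l) * P j b m l)
      _ = _ := by
          refine Finset.sum_congr rfl fun a _ => ?_
          simp only [hP]
          simp [Complex.conj_mul']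
  have hspan : ∀ X : Fin k → Matrix (Fin n) (Fin n) ℂ,
      (∀ j, X j ∈ Submodule.span ℂ (Set.range (P j))) → ∃ c, X = δ c := by
    intro X hX
    have : ∀ j, ∃ c : Fin (d j) → ℂ, ∑ a, c a • P j a = X j := fun j =>
      (Submodule.mem_span_range_iff_exists_fun ℂ).1 (hX j)
    choose c hc using this
    exact ⟨fun s => c s.1 s.2, funext fun j => (hc j).symm⟩
  have hδmem : ∀ c j, δ c j ∈ Submodule.span ℂ (Set.range (P j)) := fun c j =>
    Submodule.sum_mem _ fun a _ => Submodule.smul_mem _ _ (Submodule.subset_span ⟨a, rfl⟩)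
  obtain ⟨c0, hc0⟩ := hspan F hF
  have hrA : A *ᵥ c0 = r := by
    funext ⟨i, m⟩
    rw [hAm, hr, hR, hc0]
  have hcon : ∀ c, (∑ j, (F j + δ c j) * V * Φ j) = 0 ↔ A *ᵥ c = -r := by
    intro c
    have : (∑ j, (F j + δ c j) * V * Φ j) = R + ∑ j, δ c j * V * Φ j := by
      rw [hR, ← Finset.sum_add_distrib]
      exact Finset.sum_congr rfl fun j _ => by rw [Matrix.add_mul, Matrix.add_mul]
    rw [this]
    constructor
    · intro h
      funext ⟨i, m⟩
      have h' := congrFun (congrFun h m) i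
      rw [hAm, Pi.neg_apply, hr]
      rw [Matrix.add_apply, Matrix.zero_apply] at h'
      linear_combination h'
    · intro h
      ext m i
      have h' := congrFun h (i, m)
      rw [hAm, Pi.neg_apply, hr] at h'
      rw [Matrix.add_apply, Matrix.zero_apply, h']
      ring
  obtain ⟨h1, h2, h3, h4⟩ := aux_pinv A
  have hfr : fnorm R = vnorm r := by
    unfold fnorm vnorm
    rw [Fintype.sum_prod_type, Finset.sum_comm]
    simp only [hr]
  have hvneg : ∀ c : ((j : Fin k) × Fin (d j) → ℂ), vnorm (-c) = vnorm c := fun c => by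
    simp [vnorm]
  refine ⟨⟨⟨δ (-(pinv A *ᵥ r)), hδmem _, ?_, ?_⟩, ?_⟩, ?_⟩
  · rw [hcon, mulVec_neg, mulVec_mulVec, ← hrA, mulVec_mulVec, h1]
  · rw [hδn, hvneg]
  · rintro x ⟨X, hX, hX0, rfl⟩
    obtain ⟨c, rfl⟩ := hspan X hX
    rw [hcon] at hX0
    rw [hδn]
    have : pinv A *ᵥ r = -((pinv A * A) *ᵥ c) := by
      rw [← mulVec_mulVec, hX0, mulVec_neg, neg_neg]
    rw [this, hvneg]
    exact aux_proj _ h4 (by rw [← Matrix.mul_assoc, h2]) c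
  · rw [hfr]
    exact aux_bound A r
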